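/- arXiv:0904.0893 — 3 statements merged into one kernel-verified Lean document; each statement's English description precedes it below -/
import Mathlib

section
/- Let H be a complex Hilbert space and let X, Y be bounded linear operators on H with XY = YX and Y* = Y, and set |Y| := (Y²)^{1/2}. Then for every subset M of H one has sup_{ξ,η∈M} |⟨XYξ, η⟩| ≤ ‖X‖ · sup_{ξ∈M} ⟨|Y|ξ, ξ⟩ (suprema taken in [0,∞]). Consequently, if moreover Y ≥ 0 and XY = YX, then sup_{ξ,η∈M} |⟨XYξ, η⟩| ≤ ‖X‖ · sup_{ξ∈M} ⟨Yξ, ξ⟩. (Inequality (4.5)) -/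
/-!
The functional calculus of `Y` provides self-adjoint operators `R = √|Y|` and `T = sgn(Y) √|Y|`
with `R * R = T * T = |Y|` and `R * T = Y`, both commuting with everything that commutes with `Y`
(`exists_factorization`). Hence `⟨XYξ, η⟩ = ⟨R X T ξ, η⟩ = ⟨X T ξ, R η⟩`, and Cauchy–Schwarz bounds
this by `‖X‖ ‖Tξ‖ ‖Rη‖`, where `‖Tξ‖² = ⟨|Y|ξ, ξ⟩` and `‖Rη‖² = ⟨|Y|η, η⟩`. The product of the two
norms is at most the larger of the two squares (`norm_inner_le_mul_max`), which is at most the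
supremum over `M`. The positive case is the general one with `|Y| = Y`.
-/

open scoped ENNReal NNReal InnerProductSpace

section

variable {H : Type} [NormedAddCommGroup H] [InnerProductSpace ℂ H] [CompleteSpace H]

/-- The factorization `Y = √|Y| · (sgn(Y) √|Y|)`, both factors being self-adjoint square roots
of `|Y|` that commute with the commutant of `Y`. -/
lemma exists_factorization (Y A : H →L[ℂ] H) (hY : IsSelfAdjoint Y) (hA : 0 ≤ A)
    (hAY : A * A = Y * Y) :
    ∃ R T : H →L[ℂ] H, IsSelfAdjoint R ∧ IsSelfAdjoint T ∧ R * R = A ∧ T * T = A ∧ R * T = Y ∧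
      ∀ X : H →L[ℂ] H, Commute Y X → Commute R X := by
  have habs : cfc (fun x : ℝ => |x|) Y = A := by
    have h1 : CFC.abs Y = A := by
      rw [CFC.abs, hY.star_eq, ← hAY, CFC.sqrt_mul_self A hA]
    rw [← h1, CFC.abs_eq_cfc_norm Y hY]
    rfl
  -- Since one of `√x`, `√(-x)` vanishes, the sum is `√|x|` and the difference `sgn(x) √|x|`.
  have hR : Continuous fun x : ℝ => √x + √(-x) := by fun_prop
  have hT : Continuous fun x : ℝ => √x - √(-x) := by fun_prop
  refine ⟨cfc (fun x : ℝ => √x + √(-x)) Y, cfc (fun x : ℝ => √x - √(-x)) Y,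
    cfc_predicate _ _, cfc_predicate _ _, ?_, ?_, ?_, fun X hX => hX.cfc_real _⟩
  · rw [← cfc_mul _ _ Y hR.continuousOn hR.continuousOn, ← habs]
    congr 1
    ext x
    rcases le_total 0 x with h | h
    · simp [Real.sqrt_eq_zero_of_nonpos (neg_nonpos.2 h), abs_of_nonneg h, Real.mul_self_sqrt h]
    · simp [Real.sqrt_eq_zero_of_nonpos h, abs_of_nonpos h, Real.mul_self_sqrt (neg_nonneg.2 h)]
  · rw [← cfc_mul _ _ Y hT.continuousOn hT.continuousOn, ← habs]
    congr 1
    ext x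
    rcases le_total 0 x with h | h
    · simp [Real.sqrt_eq_zero_of_nonpos (neg_nonpos.2 h), abs_of_nonneg h, Real.mul_self_sqrt h]
    · simp [Real.sqrt_eq_zero_of_nonpos h, abs_of_nonpos h, Real.mul_self_sqrt (neg_nonneg.2 h)]
  · rw [← cfc_mul _ _ Y hR.continuousOn hT.continuousOn]
    conv_rhs => rw [← cfc_id' ℝ Y hY]
    congr 1
    ext x
    rcases le_total 0 x with h | h
    · simp [Real.sqrt_eq_zero_of_nonpos (neg_nonpos.2 h), Real.mul_self_sqrt h]
    · simp [Real.sqrt_eq_zero_of_nonpos h, Real.mul_self_sqrt (neg_nonneg.2 h)]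

lemma norm_inner_mul_self (S : H →L[ℂ] H) (hS : IsSelfAdjoint S) (ξ : H) :
    ‖⟪(S * S) ξ, ξ⟫_ℂ‖ = ‖S ξ‖ * ‖S ξ‖ := by
  have h : ⟪(S * S) ξ, ξ⟫_ℂ = ⟪S ξ, S ξ⟫_ℂ := hS.isSymmetric (S ξ) ξ
  rw [h, inner_self_eq_norm_sq_to_K, norm_pow, RCLike.norm_ofReal, abs_norm, sq]

lemma norm_inner_le_mul_max (X Y A : H →L[ℂ] H) (hcomm : X * Y = Y * X) (hY : IsSelfAdjoint Y)
    (hA : 0 ≤ A) (hAY : A * A = Y * Y) (ξ η : H) :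
    ‖⟪X (Y ξ), η⟫_ℂ‖ ≤ ‖X‖ * max ‖⟪A ξ, ξ⟫_ℂ‖ ‖⟪A η, η⟫_ℂ‖ := by
  obtain ⟨R, T, hR, hT, hRR, hTT, hRT, hc⟩ := exists_factorization Y A hY hA hAY
  have hXR : R * X = X * R := hc X hcomm.symm
  have key : ⟪X (Y ξ), η⟫_ℂ = ⟪X (T ξ), R η⟫_ℂ := by
    have e : X (Y ξ) = R (X (T ξ)) := by
      rw [← hRT]
      exact (DFunLike.congr_fun hXR (T ξ)).symm
    rw [e]
    exact hR.isSymmetric _ _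
  have hξ : ‖⟪A ξ, ξ⟫_ℂ‖ = ‖T ξ‖ * ‖T ξ‖ := by rw [← hTT, norm_inner_mul_self T hT]
  have hη : ‖⟪A η, η⟫_ℂ‖ = ‖R η‖ * ‖R η‖ := by rw [← hRR, norm_inner_mul_self R hR]
  have hmax : ‖T ξ‖ * ‖R η‖ ≤ max (‖T ξ‖ * ‖T ξ‖) (‖R η‖ * ‖R η‖) := by
    rcases le_total ‖T ξ‖ ‖R η‖ with h | h
    · exact le_max_of_le_right (by gcongr)
    · exact le_max_of_le_left (by gcongr)
  rw [key, hξ, hη]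
  calc ‖⟪X (T ξ), R η⟫_ℂ‖ ≤ ‖X (T ξ)‖ * ‖R η‖ := norm_inner_le_norm _ _
    _ ≤ ‖X‖ * ‖T ξ‖ * ‖R η‖ := by gcongr; exact X.le_opNorm _
    _ = ‖X‖ * (‖T ξ‖ * ‖R η‖) := mul_assoc _ _ _
    _ ≤ _ := by gcongr

lemma iSup_inner_le (X Y A : H →L[ℂ] H) (hcomm : X * Y = Y * X) (hY : IsSelfAdjoint Y)
    (hA : 0 ≤ A) (hAY : A * A = Y * Y) (M : Set H) :
    (⨆ ξ ∈ M, ⨆ η ∈ M, (‖⟪X (Y ξ), η⟫_ℂ‖₊ : ℝ≥0∞)) ≤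
      (‖X‖₊ : ℝ≥0∞) * ⨆ ξ ∈ M, (‖⟪A ξ, ξ⟫_ℂ‖₊ : ℝ≥0∞) := by
  refine iSup₂_le fun ξ hξ => iSup₂_le fun η hη => ?_
  have h : ‖⟪X (Y ξ), η⟫_ℂ‖₊ ≤ ‖X‖₊ * max ‖⟪A ξ, ξ⟫_ℂ‖₊ ‖⟪A η, η⟫_ℂ‖₊ := by
    rw [← NNReal.coe_le_coe]
    push_cast
    exact norm_inner_le_mul_max X Y A hcomm hY hA hAY ξ η
  have h' : (‖⟪X (Y ξ), η⟫_ℂ‖₊ : ℝ≥0∞) ≤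
      ‖X‖₊ * max (‖⟪A ξ, ξ⟫_ℂ‖₊ : ℝ≥0∞) ‖⟪A η, η⟫_ℂ‖₊ := by
    exact_mod_cast h
  refine h'.trans ?_
  gcongr
  exact max_le (le_iSup₂ (f := fun ξ (_ : ξ ∈ M) => (‖⟪A ξ, ξ⟫_ℂ‖₊ : ℝ≥0∞)) ξ hξ)
    (le_iSup₂ (f := fun ξ (_ : ξ ∈ M) => (‖⟪A ξ, ξ⟫_ℂ‖₊ : ℝ≥0∞)) η hη)

end

/-- **Inequality (4.5).**  Let `H` be a complex Hilbert space and `X, Y` bounded operators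
on `H` with `XY = YX` and `Y* = Y`, and let `|Y| = (Y²)^{1/2}` (i.e. the unique positive
operator `absY` with `absY² = Y²`).  Then for every subset `M ⊆ H`,
`sup_{ξ,η ∈ M} |⟨XYξ, η⟩| ≤ ‖X‖ · sup_{ξ ∈ M} ⟨|Y|ξ, ξ⟩` (suprema in `[0,∞]`).
Consequently, if moreover `Y ≥ 0`, then
`sup_{ξ,η ∈ M} |⟨XYξ, η⟩| ≤ ‖X‖ · sup_{ξ ∈ M} ⟨Yξ, ξ⟩`. -/
theorem ineq_4_5 {H : Type} [NormedAddCommGroup H] [InnerProductSpace ℂ H] [CompleteSpace H]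
    (X Y absY : H →L[ℂ] H)
    (hcomm : X * Y = Y * X)
    (hY : ContinuousLinearMap.adjoint Y = Y)
    (habs_pos : absY.IsPositive) (habs_sq : absY * absY = Y * Y) :
    (∀ M : Set H,
      (⨆ ξ ∈ M, ⨆ η ∈ M, (‖⟪X (Y ξ), η⟫_ℂ‖₊ : ℝ≥0∞)) ≤
        (‖X‖₊ : ℝ≥0∞) * ⨆ ξ ∈ M, (‖⟪absY ξ, ξ⟫_ℂ‖₊ : ℝ≥0∞)) ∧
    (Y.IsPositive → ∀ M : Set H,
      (⨆ ξ ∈ M, ⨆ η ∈ M, (‖⟪X (Y ξ), η⟫_ℂ‖₊ : ℝ≥0∞)) ≤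
        (‖X‖₊ : ℝ≥0∞) * ⨆ ξ ∈ M, (‖⟪Y ξ, ξ⟫_ℂ‖₊ : ℝ≥0∞)) := by
  have hsa : IsSelfAdjoint Y := hY
  exact ⟨iSup_inner_le X Y absY hcomm hsa
      ((ContinuousLinearMap.nonneg_iff_isPositive _).2 habs_pos) habs_sq,
    fun hpos => iSup_inner_le X Y Y hcomm hsa
      ((ContinuousLinearMap.nonneg_iff_isPositive _).2 hpos) rfl⟩
end

section
/- The strong* topology τ_{s*}, restricted to M₀, is compatible with the operator-norm topology of M₀ and satisfies conditions (T₁)–(T₄); consequently the completion of M₀ with respect to τ_{s*} is a locally convex quasi C*-algebra over M₀. (Proposition 4.1, strong* case) -/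
/-!
Each seminorm satisfies `‖Xξ‖, ‖X*ξ‖ ≤ p_ξ(X) ≤ 2‖ξ‖‖X‖`. The upper bound is (T₂), and since
`M₀` is norm closed, hence complete, every norm-Cauchy filter converges for both topologies, which
gives compatibility. The multiplication estimates come from `p_ξ(XY) ≤ p_{Yξ}(X) + ‖Y‖ p_ξ(X)` and
`p_ξ(YX) ≤ ‖Y‖ p_ξ(X) + p_{Y*ξ}(X)`, where invariance of `D` under `M₀ = M₀*` keeps the vectors in
`D`; for commuting `X, Y` one has `(XY)* = X*Y*`, whence (T₃) with the same vector `ξ`.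
For (T₄), strong* convergence gives pointwise convergence on `D`, and the conditions
`0 ≤ ⟪X₀ x, x⟫` and `‖X₀ x‖ ≤ ‖x‖` are closed in `x`, so they extend from the dense `D` to `H`
(`isPositive_of_tendsto_on_dense`, `norm_le_one_of_tendsto_on_dense`).
-/

open Filter Topology ContinuousLinearMap
open scoped InnerProductSpace

noncomputable section

variable {H : Type} [NormedAddCommGroup H] [InnerProductSpace ℂ H] [CompleteSpace H]

/-- The strong* seminorm `X ↦ ‖Xξ‖ + ‖X*ξ‖` on `B(H)` attached to a vector `ξ`. -/
def strongStarSeminorm (ξ : H) : Seminorm ℂ (H →L[ℂ] H) where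
  toFun X := ‖X ξ‖ + ‖(ContinuousLinearMap.adjoint X) ξ‖
  map_zero' := by simp
  add_le' X Y := by
    simp only [ContinuousLinearMap.add_apply, map_add]
    have h1 := norm_add_le (X ξ) (Y ξ)
    have h2 := norm_add_le ((ContinuousLinearMap.adjoint X) ξ)
      ((ContinuousLinearMap.adjoint Y) ξ)
    linarith
  neg' X := by simp
  smul' c X := by
    have h : ContinuousLinearMap.adjoint (c • X)
        = (starRingEnd ℂ) c • ContinuousLinearMap.adjoint X := by
      simp [map_smulₛₗ]
    simp only [h, ContinuousLinearMap.smul_apply, norm_smul, RCLike.norm_conj]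
    ring

/-- A filter on `S` is Cauchy for the strong* topology `τ_{s*}` determined by the dense
domain `D`. -/
def StrongStarCauchy (D : Submodule ℂ H) (S : StarSubalgebra ℂ (H →L[ℂ] H))
    (l : Filter S) : Prop :=
  ∀ ξ ∈ D, ∀ ε : ℝ, 0 < ε → ∃ s ∈ l, ∀ X ∈ s, ∀ Y ∈ s,
    strongStarSeminorm ξ ((X : H →L[ℂ] H) - (Y : H →L[ℂ] H)) < ε

theorem strongStarSeminorm_apply (ξ : H) (X : H →L[ℂ] H) :
    strongStarSeminorm ξ X = ‖X ξ‖ + ‖(ContinuousLinearMap.adjoint X) ξ‖ := rfl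

theorem norm_apply_le_strongStarSeminorm (ξ : H) (X : H →L[ℂ] H) :
    ‖X ξ‖ ≤ strongStarSeminorm ξ X :=
  le_add_of_nonneg_right (norm_nonneg _)

theorem norm_adjoint_apply_le_strongStarSeminorm (ξ : H) (X : H →L[ℂ] H) :
    ‖(ContinuousLinearMap.adjoint X) ξ‖ ≤ strongStarSeminorm ξ X :=
  le_add_of_nonneg_left (norm_nonneg _)

theorem strongStarSeminorm_le_norm (ξ : H) (X : H →L[ℂ] H) :
    strongStarSeminorm ξ X ≤ (2 * ‖ξ‖) * ‖X‖ := by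
  have h1 := X.le_opNorm ξ
  have h2 := (ContinuousLinearMap.adjoint X).le_opNorm ξ
  rw [LinearIsometryEquiv.norm_map] at h2
  rw [strongStarSeminorm_apply]
  linarith

/-- Convergence for the strong* seminorm at `ξ` implies convergence of the values at `ξ`. -/
theorem tendsto_apply_of_strongStar {ι' : Type} {l : Filter ι'} {F : ι' → H →L[ℂ] H}
    {X₀ : H →L[ℂ] H} {ξ : H}
    (h : Tendsto (fun i => strongStarSeminorm ξ (F i - X₀)) l (nhds 0)) :
    Tendsto (fun i => F i ξ) l (nhds (X₀ ξ)) := by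
  rw [tendsto_iff_norm_sub_tendsto_zero]
  exact squeeze_zero (fun _ => norm_nonneg _)
    (fun i => norm_apply_le_strongStarSeminorm ξ (F i - X₀)) h

open scoped ComplexOrder in
/-- A bounded operator that is a pointwise limit, on a dense subspace only, of positive operators
is positive: the set of `x` with `0 ≤ ⟪X₀ x, x⟫` is closed and contains `D`. -/
theorem isPositive_of_tendsto_on_dense {D : Submodule ℂ H} (hD : Dense (D : Set H))
    {ι' : Type} {l : Filter ι'} [l.NeBot] {F : ι' → H →L[ℂ] H} (hF : ∀ i, (F i).IsPositive)
    {X₀ : H →L[ℂ] H} (h : ∀ ξ ∈ D, Tendsto (fun i => F i ξ) l (nhds (X₀ ξ))) :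
    X₀.IsPositive := by
  rw [ContinuousLinearMap.isPositive_iff_complex]
  suffices hx : ∀ x, 0 ≤ ⟪X₀ x, x⟫_ℂ by
    intro x
    have := Complex.nonneg_iff.1 (hx x)
    exact ⟨Complex.ext rfl this.2, this.1⟩
  have hclosed : IsClosed {x | 0 ≤ ⟪X₀ x, x⟫_ℂ} :=
    isClosed_le continuous_const (by fun_prop)
  intro x
  refine hclosed.closure_subset_iff.2 (fun ξ hξ => ?_) (hD x)
  exact ge_of_tendsto' ((h ξ hξ).inner tendsto_const_nhds) fun i => (hF i).inner_nonneg_left ξ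

/-- The closed unit ball of the operator norm is stable under pointwise limits on a dense
subspace. -/
theorem norm_le_one_of_tendsto_on_dense {D : Submodule ℂ H} (hD : Dense (D : Set H))
    {ι' : Type} {l : Filter ι'} [l.NeBot] {F : ι' → H →L[ℂ] H} (hF : ∀ i, ‖F i‖ ≤ 1)
    {X₀ : H →L[ℂ] H} (h : ∀ ξ ∈ D, Tendsto (fun i => F i ξ) l (nhds (X₀ ξ))) :
    ‖X₀‖ ≤ 1 := by
  refine X₀.opNorm_le_bound zero_le_one fun x => ?_
  have hclosed : IsClosed {x | ‖X₀ x‖ ≤ 1 * ‖x‖} :=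
    isClosed_le (by fun_prop) (by fun_prop)
  refine hclosed.closure_subset_iff.2 (fun ξ hξ => ?_) (hD x)
  exact le_of_tendsto' (h ξ hξ).norm fun i => (F i).le_of_opNorm_le (hF i) ξ

/-- **Proposition 4.1 (strong* case).**  Let `M₀` be a unital C*-algebra of bounded
operators on `H` leaving a dense subspace `D` invariant.  Then the strong* topology
`τ_{s*}` (given by the seminorms `p_ξ(X) = ‖Xξ‖ + ‖X*ξ‖`, `ξ ∈ D`) on `M₀` is compatible
with the operator-norm topology of `M₀` and satisfies conditions (T₁)–(T₄); consequently
(by Definition 3.3) the completion of `M₀` with respect to `τ_{s*}` is a locally convex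
quasi C*-algebra over `M₀`. -/
theorem strongStar_lcqc (D : Submodule ℂ H) (hD : Dense (D : Set H))
    (S : StarSubalgebra ℂ (H →L[ℂ] H)) (hSclosed : IsClosed (S : Set (H →L[ℂ] H)))
    (hinv : ∀ X ∈ S, ∀ ξ ∈ D, X ξ ∈ D) :
    -- compatibility of `τ_{s*}` with the norm topology of `M₀`
    (∀ l : Filter S, l.NeBot → Cauchy (l.map (fun X : S => (X : H →L[ℂ] H))) →
      StrongStarCauchy D S l →
      ((∃ X₀ : S, Tendsto (fun X : S => (X : H →L[ℂ] H)) l (nhds (X₀ : H →L[ℂ] H))) ↔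
        (∃ X₀ : S, ∀ ξ ∈ D, Tendsto
          (fun X : S => strongStarSeminorm ξ ((X : H →L[ℂ] H) - (X₀ : H →L[ℂ] H)))
          l (nhds 0)))) ∧
    -- (T₁): the multiplication of `M₀` is separately `τ_{s*}`-continuous
    (∀ Y ∈ S, ∀ ξ ∈ D, ∃ (C : ℝ) (s : Finset H), (↑s ⊆ (D : Set H)) ∧ 0 ≤ C ∧
      ∀ X ∈ S, strongStarSeminorm ξ (X * Y) ≤ C * (s.sup strongStarSeminorm) X ∧
        strongStarSeminorm ξ (Y * X) ≤ C * (s.sup strongStarSeminorm) X) ∧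
    -- (T₁), continuity of the involution: `p_ξ(X*) = p_ξ(X)`
    (∀ ξ ∈ D, ∀ X : H →L[ℂ] H,
      strongStarSeminorm ξ (ContinuousLinearMap.adjoint X) = strongStarSeminorm ξ X) ∧
    -- (T₂): `τ_{s*}` is coarser than the norm topology
    (∀ ξ ∈ D, ∃ C : ℝ, ∀ X : H →L[ℂ] H, strongStarSeminorm ξ X ≤ C * ‖X‖) ∧
    -- (T₃)
    (∀ ξ ∈ D, ∃ η ∈ D, ∀ X ∈ S, ∀ Y ∈ S, X * Y = Y * X →
      strongStarSeminorm ξ (X * Y) ≤ ‖X‖ * strongStarSeminorm η Y) ∧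
    -- (T₄), first half: `U(M₀)₊` is `τ_{s*}`-closed
    (∀ (ι' : Type) (l : Filter ι') (F : ι' → S), l.NeBot →
      (∀ i, (F i : H →L[ℂ] H).IsPositive ∧ ‖(F i : H →L[ℂ] H)‖ ≤ 1) →
      ∀ X₀ : S, (∀ ξ ∈ D, Tendsto
          (fun i => strongStarSeminorm ξ ((F i : H →L[ℂ] H) - (X₀ : H →L[ℂ] H)))
          l (nhds 0)) →
        (X₀ : H →L[ℂ] H).IsPositive ∧ ‖(X₀ : H →L[ℂ] H)‖ ≤ 1) ∧
    -- (T₄), second half: `Ã₀[τ_{s*}]_{q+} ∩ M₀ = (M₀)₊`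
    (∀ (ι' : Type) (l : Filter ι') (F : ι' → S), l.NeBot →
      (∀ i, (F i : H →L[ℂ] H).IsPositive) →
      ∀ X₀ : S, (∀ ξ ∈ D, Tendsto
          (fun i => strongStarSeminorm ξ ((F i : H →L[ℂ] H) - (X₀ : H →L[ℂ] H)))
          l (nhds 0)) →
        (X₀ : H →L[ℂ] H).IsPositive) := by
  refine ⟨?_, ?_, ?_, ?_, ?_, ?_, ?_⟩
  · -- Both sides of the equivalence hold outright: `S` is norm complete.
    intro l hl hcauchy _
    obtain ⟨X, hX⟩ := CompleteSpace.complete hcauchy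
    have hX' : Tendsto (fun X : S => (X : H →L[ℂ] H)) l (nhds X) := hX
    have hXS : X ∈ S := hSclosed.mem_of_tendsto hX' (Eventually.of_forall fun Y => Y.2)
    refine iff_of_true ⟨⟨X, hXS⟩, hX'⟩ ⟨⟨X, hXS⟩, fun ξ _ => ?_⟩
    refine squeeze_zero (fun _ => apply_nonneg _ _)
      (fun Y => strongStarSeminorm_le_norm ξ ((Y : H →L[ℂ] H) - X)) ?_
    simpa using (tendsto_iff_norm_sub_tendsto_zero.1 hX').const_mul (2 * ‖ξ‖)
  · intro Y hY ξ hξ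
    classical
    have hYstar : ContinuousLinearMap.adjoint Y ∈ S := star_mem hY
    -- `‖XYξ‖` and `‖X*Y*ξ‖` are controlled by the seminorms at `Yξ` and `Y*ξ`.
    refine ⟨1 + ‖Y‖, {ξ, Y ξ, ContinuousLinearMap.adjoint Y ξ}, ?_, by positivity, ?_⟩
    · intro η hη
      simp only [Finset.coe_insert, Finset.coe_singleton, Set.mem_insert_iff,
        Set.mem_singleton_iff] at hη
      rcases hη with rfl | rfl | rfl
      exacts [hξ, hinv Y hY ξ hξ, hinv _ hYstar ξ hξ]
    · intro X _
      set s : Finset H := {ξ, Y ξ, ContinuousLinearMap.adjoint Y ξ} with hs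
      have hle : ∀ η ∈ s, strongStarSeminorm η X ≤ (s.sup strongStarSeminorm) X :=
        fun η hη => (Finset.le_sup (f := strongStarSeminorm) hη : _ ≤ _) X
      have h1 := hle ξ (by simp [hs])
      have h2 := hle (Y ξ) (by simp [hs])
      have h3 := hle (ContinuousLinearMap.adjoint Y ξ) (by simp [hs])
      have e1 := norm_apply_le_strongStarSeminorm (Y ξ) X
      have e2 := norm_adjoint_apply_le_strongStarSeminorm (ContinuousLinearMap.adjoint Y ξ) X
      have b1 : ‖Y (X ξ)‖ ≤ ‖Y‖ * (s.sup strongStarSeminorm) X :=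
        Y.le_opNorm_of_le ((norm_apply_le_strongStarSeminorm ξ X).trans h1)
      have b2 : ‖ContinuousLinearMap.adjoint Y (ContinuousLinearMap.adjoint X ξ)‖
          ≤ ‖Y‖ * (s.sup strongStarSeminorm) X := by
        have := (ContinuousLinearMap.adjoint Y).le_opNorm_of_le
          ((norm_adjoint_apply_le_strongStarSeminorm ξ X).trans h1)
        rwa [LinearIsometryEquiv.norm_map] at this
      simp only [strongStarSeminorm_apply ξ, ContinuousLinearMap.mul_def,
        ContinuousLinearMap.adjoint_comp, ContinuousLinearMap.comp_apply]
      constructor <;> linarith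
  · intro ξ _ X
    rw [strongStarSeminorm_apply, strongStarSeminorm_apply, ContinuousLinearMap.adjoint_adjoint,
      add_comm]
  · exact fun ξ _ => ⟨2 * ‖ξ‖, strongStarSeminorm_le_norm ξ⟩
  · intro ξ hξ
    refine ⟨ξ, hξ, fun X _ Y _ hXY => ?_⟩
    -- Commutation turns `(XY)* = Y*X*` into `X*Y*`, so that `X*` acts last in both terms.
    have hadj : ContinuousLinearMap.adjoint (X * Y)
        = ContinuousLinearMap.adjoint X * ContinuousLinearMap.adjoint Y := by
      rw [hXY]
      exact ContinuousLinearMap.adjoint_comp Y X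
    have h1 := X.le_opNorm (Y ξ)
    have h2 := (ContinuousLinearMap.adjoint X).le_opNorm (ContinuousLinearMap.adjoint Y ξ)
    rw [LinearIsometryEquiv.norm_map] at h2
    rw [strongStarSeminorm_apply, strongStarSeminorm_apply, hadj, mul_add]
    exact add_le_add h1 h2
  · intro ι' l F hl hF X₀ h
    have h' := fun ξ hξ => tendsto_apply_of_strongStar (h ξ hξ)
    exact ⟨isPositive_of_tendsto_on_dense hD (fun i => (hF i).1) h',
      norm_le_one_of_tendsto_on_dense hD (fun i => (hF i).2) h'⟩
  · intro ι' l F hl hF X₀ h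
    exact isPositive_of_tendsto_on_dense hD hF
      fun ξ hξ => tendsto_apply_of_strongStar (h ξ hξ)
end
end

section
/- Let D be a dense subspace of a complex Hilbert space H and let A : D → H be a linear operator whose adjoint A* has domain containing D. Suppose there exists a bounded linear operator B on H with B ≥ 0, ‖B‖ ≤ 1, and B(D) ⊆ D, such that B(ξ + Aξ) = ξ for all ξ ∈ D and Bξ + A(Bξ) = ξ for all ξ ∈ D (i.e., B is an inverse of I + A). Then A is closable and its closure Ā is a positive self-adjoint operator on H. (Proposition 4.3, (ii) ⇒ (iii)) -/
/-!
Put `G = {(x, y) | B (x + y) = x}`, the graph of `B⁻¹ - I`. Since `B` inverts `I + T`, the graph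
of `T` lies in the closed set `G`; conversely every point of `G` has the form `(B u, u - B u)`, and
these points lie in the graph of `T` for `u` in the dense domain, so `G` is the closure of the graph
of `T`. Self-adjointness of `B` makes `T` symmetric, hence closable, and makes `G` equal to
its own adjoint. Positivity is `⟪u - B u, B u⟫ ≥ 0`, i.e. `B² ≤ B`, which follows from `0 ≤ B ≤ I`.
-/

open scoped InnerProductSpace ComplexOrder

/-- `⟪u - B u, B u⟫ ≥ 0` for a positive contraction `B`, by the identity
`B - B² = B (I - B) B + (I - B) B (I - B)`. -/
theorem inner_sub_apply_nonneg {H : Type} [NormedAddCommGroup H] [InnerProductSpace ℂ H]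
    [CompleteSpace H] (B : H →L[ℂ] H) (hB : B.IsPositive) (hn : ‖B‖ ≤ 1) (u : H) :
    0 ≤ (⟪u - B u, B u⟫_ℂ : ℂ) := by
  have hle : B ≤ 1 := (CStarAlgebra.norm_le_one_iff_of_nonneg B
    ((ContinuousLinearMap.nonneg_iff_isPositive B).2 hB)).1 hn
  have h1 := ((ContinuousLinearMap.le_def B 1).1 hle).inner_nonneg_left (B u)
  have h2 := hB.inner_nonneg_right (u - B u)
  have hs : ∀ x y : H, (⟪B x, y⟫_ℂ : ℂ) = ⟪x, B y⟫_ℂ := hB.isSymmetric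
  convert add_nonneg h1 h2 using 1
  simp only [sub_apply, one_apply_eq_self, map_sub,
    inner_sub_left, inner_sub_right, hs]
  ring

/-- **Proposition 4.3, (ii) ⇒ (iii).**  Let `D` be a dense subspace of a complex Hilbert
space `H` and `A : D → H` a linear operator whose adjoint has domain containing `D`
(formalized as the partially defined operator `T` with dense domain `D`).  If there is a
bounded operator `B ≥ 0` with `‖B‖ ≤ 1` and `B(D) ⊆ D` which inverts `I + A`
(`B(ξ + Aξ) = ξ` and `Bξ + A(Bξ) = ξ` for all `ξ ∈ D`), then `A` is closable and its
closure `Ā` is a positive self-adjoint operator on `H`. -/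
theorem prop_4_3 {H : Type} [NormedAddCommGroup H] [InnerProductSpace ℂ H] [CompleteSpace H]
    (T : H →ₗ.[ℂ] H) (hdense : Dense (T.domain : Set H))
    (hadj : ∀ η ∈ T.domain, ∃ ζ : H, ∀ ξ : T.domain, (⟪T ξ, η⟫_ℂ : ℂ) = ⟪(ξ : H), ζ⟫_ℂ)
    (B : H →L[ℂ] H) (hBpos : B.IsPositive) (hBnorm : ‖B‖ ≤ 1)
    (hBD : ∀ x ∈ T.domain, B x ∈ T.domain)
    (hB1 : ∀ ξ : T.domain, B ((ξ : H) + T ξ) = ξ)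
    (hB2 : ∀ ξ : T.domain, ∃ η : T.domain, (η : H) = B (ξ : H) ∧ B (ξ : H) + T η = ξ) :
    T.IsClosable ∧ T.closure.adjoint = T.closure ∧
      ∀ ξ : T.closure.domain, 0 ≤ (⟪T.closure ξ, (ξ : H)⟫_ℂ : ℂ) := by
  have hs : ∀ x y : H, (⟪B x, y⟫_ℂ : ℂ) = ⟪x, B y⟫_ℂ := hBpos.isSymmetric
  have hsymm : T.IsFormalAdjoint T := by
    intro ξ η
    have h := hs ((ξ : H) + T ξ) ((η : H) + T η)
    rw [hB1, hB1] at h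
    simp only [inner_add_left, inner_add_right] at h
    linear_combination -h
  have hclos : T.IsClosable :=
    LinearPMap.IsClosable.leIsClosable
      (LinearPMap.adjoint_isClosed hdense).isClosable (hsymm.le_adjoint hdense)
  have hG : ∀ x y : H, (x, y) ∈ T.closure.graph ↔ B (x + y) = x := by
    intro x y
    rw [← hclos.graph_closure_eq_closure_graph, ← SetLike.mem_coe,
      Submodule.topologicalClosure_coe]
    constructor
    · have hcl : IsClosed {p : H × H | B (p.1 + p.2) = p.1} :=
        isClosed_eq (by fun_prop) (by fun_prop)
      intro h
      refine closure_minimal ?_ hcl h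
      rintro ⟨a, b⟩ hab
      obtain ⟨ξ, rfl, rfl⟩ := (LinearPMap.mem_graph_iff T).1 hab
      exact hB1 ξ
    · intro h
      have hc : Continuous fun u : H => (B u, u - B u) := by fun_prop
      have hm : Set.MapsTo (fun u : H => (B u, u - B u)) T.domain T.graph := by
        intro u hu
        obtain ⟨η, h1, h2⟩ := hB2 ⟨u, hu⟩
        exact (LinearPMap.mem_graph_iff T).2 ⟨η, h1, eq_sub_of_add_eq' h2⟩
      have := hm.closure hc (hdense (x + y))
      simpa [h] using this
  have hdense' : Dense (T.closure.domain : Set H) := hdense.mono T.le_closure.1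
  refine ⟨hclos, ?_, ?_⟩
  · refine LinearPMap.eq_of_eq_graph ?_
    rw [LinearPMap.adjoint_graph_eq_graph_adjoint hdense']
    ext ⟨x, y⟩
    rw [hG, Submodule.mem_adjoint_iff]
    constructor
    · intro h
      refine ext_inner_left ℂ fun u => ?_
      have := h (B u) (u - B u) ((hG _ _).2 (by simp))
      simp only [inner_sub_left, hs, map_add, inner_add_right] at this ⊢
      linear_combination -this
    · intro h a b hab
      rw [hG] at hab
      have h1 := hs (a + b) (x + y)
      rw [h, hab] at h1
      simp only [inner_add_left, inner_add_right] at h1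
      linear_combination -h1
  · intro ξ
    have h := (hG _ _).1 (T.closure.mem_graph ξ)
    have hp := inner_sub_apply_nonneg B hBpos hBnorm ((ξ : H) + T.closure ξ)
    rwa [h, add_sub_cancel_left] at hp
end
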